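/- Let 𝒮₀ be a nonempty decreasing subset of 𝒮 and δ>0. For every μ∈𝒫(V_S): Λ_{δ,𝒮₀}(μ) < ∞ if and only if μ∈𝒞(𝒮₀) and there exists q∈𝒯_S with μq=μ. -/

import Mathlib

open scoped BigOperators Classical ENNReal
open Filter Topology

noncomputable section
namespace ORRW

/-- Probability measures on a finite type `A`, topologized as a subset of `ℝ^A`. -/
abbrev ProbMeas (A : Type) [Fintype A] : Type :=
  {p : A → ℝ // (∀ a, 0 ≤ p a) ∧ ∑ a, p a = 1}

/-- Relative entropy `R(γ‖ρ)` between two finitely supported "rows", valued in `EReal`,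
with `+∞` when absolute continuity fails. -/
def relEnt {A : Type} [Fintype A] (γ ρ : A → ℝ) : EReal :=
  if ∀ a, ρ a = 0 → γ a = 0 then ((∑ a, γ a * Real.log (γ a / ρ a) : ℝ) : EReal)
  else (⊤ : EReal)

/-- `∫ R(q‖p) dν = Σ_a ν(a) · R(q(a,·)‖p(a,·))`. -/
def relEntInt {A : Type} [Fintype A] (ν : A → ℝ) (q p : A → A → ℝ) : EReal :=
  ∑ a, (ν a : EReal) * relEnt (q a) (p a)

/-- `ν` is an invariant measure of the kernel `q`. -/
def Invariant {A : Type} [Fintype A] (ν : A → ℝ) (q : A → A → ℝ) : Prop :=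
  ∀ y, ∑ x, ν x * q x y = ν y

/-- Extended-real logarithm: `⊥` at nonpositive arguments. -/
def elog (x : ℝ) : EReal := if x ≤ 0 then (⊥ : EReal) else ((Real.log x : ℝ) : EReal)

/-- Empirical measure of a finite trajectory `f : Fin (n+1) → A`. -/
def empMeas {A : Type} [Fintype A] [DecidableEq A] (n : ℕ) (f : Fin (n + 1) → A) :
    ProbMeas A :=
  ⟨fun a => ((Finset.univ.filter (fun i => f i = a)).card : ℝ) / (n + 1),
    fun a => by positivity, by
      have key : ∑ a : A, ((Finset.univ.filter (fun i => f i = a)).card) = n + 1 := by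
        have h := Finset.card_eq_sum_card_fiberwise
          (s := (Finset.univ : Finset (Fin (n + 1)))) (t := (Finset.univ : Finset A))
          (f := f) (fun i _ => Finset.mem_univ (f i))
        simpa using h.symm
      have key' : ∑ a : A, (((Finset.univ.filter (fun i => f i = a)).card : ℝ)) = (n : ℝ) + 1 := by
        have h2 := congrArg (fun m : ℕ => (m : ℝ)) key
        push_cast at h2
        simpa using h2
      rw [← Finset.sum_div, key', div_self (by positivity)]⟩

section Graph

variable {V : Type} [Fintype V] [DecidableEq V]

/-- Weight of an edge given the set `F` of already traversed edges. -/
def gw (δ : ℝ) (F : Finset (Sym2 V)) (e : Sym2 V) : ℝ := if e ∈ F then δ else 1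

/-- The transition kernel `p̂_F` on `V`. -/
def phat (G : SimpleGraph V) [DecidableRel G.Adj] (δ : ℝ) (F : Finset (Sym2 V))
    (x y : V) : ℝ :=
  if G.Adj x y then gw δ F s(x, y) / ∑ z ∈ G.neighborFinset x, gw δ F s(x, z) else 0

/-- Two edges are adjacent iff they share a vertex. -/
def edgeAdj (e e' : Sym2 V) : Prop := ∃ v, v ∈ e ∧ v ∈ e'

/-- `x` is a vertex of the edge set `F`. -/
def memVerts (F : Finset (Sym2 V)) (x : V) : Prop := ∃ e ∈ F, x ∈ e

/-- `𝒯_G`: stochastic matrices on `V` adapted to `G`. -/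
def TG (G : SimpleGraph V) : Set (V → V → ℝ) :=
  {q | (∀ x y, 0 ≤ q x y) ∧ (∀ x, ∑ y, q x y = 1) ∧ ∀ x y, q x y ≠ 0 → G.Adj x y}

/-- `𝒯(F)`: stochastic kernels from the vertex set of `F` to `V`, supported on `F`. -/
def TE (F : Finset (Sym2 V)) : Set (V → V → ℝ) :=
  {q | (∀ x y, 0 ≤ q x y) ∧ (∀ x, memVerts F x → ∑ y, q x y = 1) ∧
    ∀ x y, q x y ≠ 0 → s(x, y) ∈ F}

/-- `ℰ`: admissible increasing sequences of traversed edge sets. -/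
def seqE (G : SimpleGraph V) [DecidableRel G.Adj] (v₁ : V) :
    Set (Fin G.edgeFinset.card → Finset (Sym2 V)) :=
  {Es | (∀ k, Es k ⊆ G.edgeFinset) ∧ (∀ k, (Es k).card = (k : ℕ) + 1) ∧
    (∀ k l : Fin G.edgeFinset.card, (k : ℕ) + 1 = (l : ℕ) → Es k ⊂ Es l) ∧
    (∀ k : Fin G.edgeFinset.card, (k : ℕ) = 0 → ∃ e ∈ Es k, v₁ ∈ e) ∧
    (∀ k l : Fin G.edgeFinset.card, (k : ℕ) + 1 = (l : ℕ) →
      ∀ e ∈ Es l \ Es k, ∃ e' ∈ Es k, edgeAdj e e')}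

/-- The rate function `I_δ`. -/
def Ifun (G : SimpleGraph V) [DecidableRel G.Adj] (v₁ : V) (δ : ℝ) (ν : ProbMeas V) : EReal :=
  sInf { c : EReal |
    ∃ (νs : Fin G.edgeFinset.card → ProbMeas V) (r : Fin G.edgeFinset.card → ℝ)
      (Es : Fin G.edgeFinset.card → Finset (Sym2 V))
      (qs : Fin G.edgeFinset.card → V → V → ℝ),
      Es ∈ seqE G v₁ ∧ (∀ k, 0 ≤ r k) ∧ (∑ k, r k = 1) ∧
      (∀ k x, (νs k).1 x ≠ 0 → memVerts (Es k) x) ∧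
      (∀ x, ∑ k, r k * (νs k).1 x = ν.1 x) ∧
      (∀ k, qs k ∈ TE (Es k)) ∧ (∀ k, Invariant (νs k).1 (qs k)) ∧
      c = ∑ k, ((r k : ℝ) : EReal) * relEntInt (νs k).1 (qs k) (phat G δ (Es k)) }

/-- Edges traversed along a path, given as a list of consecutively visited vertices. -/
def pathEdges : List V → Finset (Sym2 V)
  | [] => ∅
  | [_] => ∅
  | x :: y :: t => insert s(x, y) (pathEdges (y :: t))

/-- Product of one-step ORRW transition probabilities along a trajectory,
the trajectory being listed in reverse chronological order. -/
def stepsProb (G : SimpleGraph V) [DecidableRel G.Adj] (δ : ℝ) : List V → ℝ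
  | [] => 1
  | [_] => 1
  | y :: x :: t => phat G δ (pathEdges (x :: t).reverse) x y * stepsProb G δ (x :: t)

/-- The law of `(X_0, …, X_n)` for the `δ`-ORRW started at `v₁`. -/
def trajProb (G : SimpleGraph V) [DecidableRel G.Adj] (δ : ℝ) (v₁ : V) (n : ℕ)
    (f : Fin (n + 1) → V) : ℝ :=
  if f 0 = v₁ then stepsProb G δ (List.ofFn f).reverse else 0

/-- `P_{v₁}(L_{n+1} ∈ C)`: the probability that the empirical measure of the first
`n+1` positions of the `δ`-ORRW lies in `C`. -/
def probEmp (G : SimpleGraph V) [DecidableRel G.Adj] (δ : ℝ) (v₁ : V) (n : ℕ)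
    (C : Set (ProbMeas V)) : ℝ :=
  ∑ f : Fin (n + 1) → V, if empMeas n f ∈ C then trajProb G δ v₁ n f else 0

/-- The family `𝒮` of edge sets of connected subgraphs having an edge at `v₁`. -/
def scrS (G : SimpleGraph V) [DecidableRel G.Adj] (v₁ : V) : Set (Finset (Sym2 V)) :=
  {F | F ⊆ G.edgeFinset ∧ (∃ e ∈ F, v₁ ∈ e) ∧
    ∀ x y : V, memVerts F x → memVerts F y →
      (SimpleGraph.fromEdgeSet (↑F : Set (Sym2 V))).Reachable x y}

/-- `𝒮₀` is a decreasing subset of `𝒮`. -/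
def DecreasingIn (G : SimpleGraph V) [DecidableRel G.Adj] (v₁ : V)
    (S0 : Set (Finset (Sym2 V))) : Prop :=
  ∀ F₁ F₂, F₁ ∈ scrS G v₁ → F₂ ∈ scrS G v₁ → F₁ ⊆ F₂ → F₂ ∈ S0 → F₁ ∈ S0

/-- `P_{v₁}(T_{𝒮₀} > n)`. -/
def probTgt (G : SimpleGraph V) [DecidableRel G.Adj] (δ : ℝ) (v₁ : V)
    (S0 : Set (Finset (Sym2 V))) (n : ℕ) : ℝ :=
  ∑ f : Fin (n + 1) → V,
    if ∀ k, 1 ≤ k → k ≤ n → pathEdges ((List.ofFn f).take (k + 1)) ∈ S0 then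
      trajProb G δ v₁ n f
    else 0

/-- `P_{v₁}(C_E > n)` for the edge cover time `C_E`. -/
def probCgt (G : SimpleGraph V) [DecidableRel G.Adj] (δ : ℝ) (v₁ : V) (n : ℕ) : ℝ :=
  ∑ f : Fin (n + 1) → V,
    if ¬ G.edgeFinset ⊆ pathEdges (List.ofFn f) then trajProb G δ v₁ n f else 0

/-- `E_{v₁}[exp (α T_{𝒮₀})]`, valued in `ℝ≥0∞`; the stopping time takes values in
`{1, 2, …} ∪ {∞}`. -/
def expT (G : SimpleGraph V) [DecidableRel G.Adj] (δ : ℝ) (v₁ : V)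
    (S0 : Set (Finset (Sym2 V))) (α : ℝ) : ℝ≥0∞ :=
  (∑' n : ℕ, ENNReal.ofReal
      (Real.exp (α * (n + 1)) * (probTgt G δ v₁ S0 n - probTgt G δ v₁ S0 (n + 1)))) +
    (if 0 < α then (⊤ : ℝ≥0∞) else if α = 0 then 1 else 0) *
      ENNReal.ofReal (⨅ n : ℕ, probTgt G δ v₁ S0 n)

/-- `E_{v₁}[exp (α C_E)]`, valued in `ℝ≥0∞`. -/
def expC (G : SimpleGraph V) [DecidableRel G.Adj] (δ : ℝ) (v₁ : V) (α : ℝ) : ℝ≥0∞ :=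
  (∑' n : ℕ, ENNReal.ofReal
      (Real.exp (α * (n + 1)) * (probCgt G δ v₁ n - probCgt G δ v₁ (n + 1)))) +
    (if 0 < α then (⊤ : ℝ≥0∞) else if α = 0 then 1 else 0) *
      ENNReal.ofReal (⨅ n : ℕ, probCgt G δ v₁ n)

/-- The critical exponent `α_c(δ)` attached to a family `𝒮₀` of edge sets. -/
def alphaC (G : SimpleGraph V) [DecidableRel G.Adj] (δ : ℝ)
    (S0 : Set (Finset (Sym2 V))) : EReal :=
  sInf { c : EReal | ∃ (ν : ProbMeas V) (F : Finset (Sym2 V)) (q : V → V → ℝ),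
    F ∈ S0 ∧ q ∈ TE F ∧ (∀ x, ν.1 x ≠ 0 → memVerts F x) ∧ Invariant ν.1 q ∧
    c = relEntInt ν.1 q (phat G δ F) }

/-- `α_c^1(δ)`: the critical exponent for the cover time. -/
def alphaC1 (G : SimpleGraph V) [DecidableRel G.Adj] (v₁ : V) (δ : ℝ) : EReal :=
  alphaC G δ (scrS G v₁ \ {G.edgeFinset})

end Graph

section Lifted

variable {V : Type} [Fintype V] [LinearOrder V]

/-- Smaller endpoint of an unordered pair. -/
def sym2lo (e : Sym2 V) : V := Sym2.lift ⟨fun a b => min a b, fun a b => min_comm a b⟩ e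

/-- Larger endpoint of an unordered pair. -/
def sym2hi (e : Sym2 V) : V := Sym2.lift ⟨fun a b => max a b, fun a b => max_comm a b⟩ e

/-- `V_S = E × {-1, 1}`: vertex set of the lifted directed graph `S`
(`true` plays the role of `+1`). -/
abbrev VSet (G : SimpleGraph V) [DecidableRel G.Adj] : Type :=
  {e : Sym2 V // e ∈ G.edgeFinset} × Bool

/-- Tail `z⁻` of an oriented edge. -/
def zm (G : SimpleGraph V) [DecidableRel G.Adj] (z : VSet G) : V :=
  if z.2 then sym2lo z.1.1 else sym2hi z.1.1

/-- Head `z⁺` of an oriented edge. -/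
def zp (G : SimpleGraph V) [DecidableRel G.Adj] (z : VSet G) : V :=
  if z.2 then sym2hi z.1.1 else sym2lo z.1.1

/-- The kernel `p_F` on the lifted directed graph `S`. -/
def pS (G : SimpleGraph V) [DecidableRel G.Adj] (δ : ℝ) (F : Finset (Sym2 V))
    (z₁ z₂ : VSet G) : ℝ :=
  if zp G z₁ = zm G z₂ then
    gw δ F z₂.1.1 / ∑ w : VSet G, (if zp G z₁ = zm G w then gw δ F w.1.1 else 0)
  else 0

/-- `𝒯_S`: stochastic matrices on `V_S` moving along orientations. -/
def TS (G : SimpleGraph V) [DecidableRel G.Adj] : Set (VSet G → VSet G → ℝ) :=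
  {q | (∀ z w, 0 ≤ q z w) ∧ (∀ z, ∑ w, q z w = 1) ∧ ∀ z w, q z w ≠ 0 → zp G z = zm G w}

/-- `𝒞(𝒮₀)`: probability measures on `V_S` whose first marginal is supported in
some member of `𝒮₀`. -/
def CC (G : SimpleGraph V) [DecidableRel G.Adj] (S0 : Set (Finset (Sym2 V))) :
    Set (ProbMeas (VSet G)) :=
  {μ | ∃ F ∈ S0, ∀ z : VSet G, μ.1 z ≠ 0 → z.1.1 ∈ F}

/-- `Λ_{δ,𝒮₀}`. -/
def Lam (G : SimpleGraph V) [DecidableRel G.Adj] (v₁ : V) (δ : ℝ)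
    (S0 : Set (Finset (Sym2 V))) (μ : ProbMeas (VSet G)) : EReal :=
  sInf { c : EReal |
    ∃ (μs : Fin G.edgeFinset.card → ProbMeas (VSet G)) (r : Fin G.edgeFinset.card → ℝ)
      (Es : Fin G.edgeFinset.card → Finset (Sym2 V))
      (qs : Fin G.edgeFinset.card → VSet G → VSet G → ℝ),
      Es ∈ seqE G v₁ ∧ (∀ k, 0 ≤ r k) ∧ (∀ k, Es k ∉ S0 → r k = 0) ∧ (∑ k, r k = 1) ∧
      (∀ k z, (μs k).1 z ≠ 0 → z.1.1 ∈ Es k) ∧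
      (∀ z, ∑ k, r k * (μs k).1 z = μ.1 z) ∧
      (∀ k, qs k ∈ TS G) ∧ (∀ k, Invariant (μs k).1 (qs k)) ∧
      c = ∑ k, ((r k : ℝ) : EReal) * relEntInt (μs k).1 (qs k) (pS G δ (Es k)) }

/-- `Λ^z_{δ,𝒮₀}`. -/
def LamZ (G : SimpleGraph V) [DecidableRel G.Adj] (v₁ : V) (δ : ℝ)
    (S0 : Set (Finset (Sym2 V))) (z : VSet G) (μ : ProbMeas (VSet G)) : EReal :=
  sInf { c : EReal |
    ∃ (μs : Fin G.edgeFinset.card → ProbMeas (VSet G)) (r : Fin G.edgeFinset.card → ℝ)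
      (Es : Fin G.edgeFinset.card → Finset (Sym2 V))
      (qs : Fin G.edgeFinset.card → VSet G → VSet G → ℝ),
      Es ∈ seqE G v₁ ∧ (∀ k : Fin G.edgeFinset.card, (k : ℕ) = 0 → Es k = {z.1.1}) ∧
      (∀ k, 0 ≤ r k) ∧ (∀ k, Es k ∉ S0 → r k = 0) ∧ (∑ k, r k = 1) ∧
      (∀ k w, (μs k).1 w ≠ 0 → w.1.1 ∈ Es k) ∧
      (∀ w, ∑ k, r k * (μs k).1 w = μ.1 w) ∧
      (∀ k, qs k ∈ TS G) ∧ (∀ k, Invariant (μs k).1 (qs k)) ∧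
      c = ∑ k, ((r k : ℝ) : EReal) * relEntInt (μs k).1 (qs k) (pS G δ (Es k)) }

/-- `Λ₁`: the Donsker–Varadhan functional for the simple random walk on `S`
(whose kernel is `pS` with `δ = 1`). -/
def Lam1 (G : SimpleGraph V) [DecidableRel G.Adj] (μ : ProbMeas (VSet G)) : EReal :=
  sInf { c : EReal | ∃ q ∈ TS G, Invariant μ.1 q ∧ c = relEntInt μ.1 q (pS G 1 ∅) }

/-- Boundary `∂F` of an edge set: edges of `F` adjacent to some edge outside `F`. -/
def bdry (G : SimpleGraph V) [DecidableRel G.Adj] (F : Finset (Sym2 V)) : Finset (Sym2 V) :=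
  F.filter fun e => ∃ e' ∈ G.edgeFinset \ F, edgeAdj e e'

/-- Out-degree `d(z)` of `z` in `S`. -/
def outDeg (G : SimpleGraph V) [DecidableRel G.Adj] (z : VSet G) : ℕ :=
  (Finset.univ.filter (fun w : VSet G => zp G z = zm G w)).card

/-- Number `k(z)` of out-neighbours of `z` lying in `F × {-1, 1}`. -/
def outDegIn (G : SimpleGraph V) [DecidableRel G.Adj] (F : Finset (Sym2 V))
    (z : VSet G) : ℕ :=
  (Finset.univ.filter (fun w : VSet G => zp G z = zm G w ∧ w.1.1 ∈ F)).card

/-- The law of `(Z_0, …, Z_n)` for the lifted `δ`-ORRW conditioned on `Z_0 = z`. -/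
def liftTraj (G : SimpleGraph V) [DecidableRel G.Adj] (δ : ℝ) (z : VSet G) (n : ℕ)
    (g : Fin (n + 1) → VSet G) : ℝ :=
  if g 0 = z then
    ∏ i : Fin n,
      pS G δ ((Finset.Iic i.castSucc).image (fun j => (g j).1.1))
        (g i.castSucc) (g i.succ)
  else 0

/-- The restricted logarithmic Laplace functional `W^{n+1}_{𝒮₀}(z)`. -/
def Wres (G : SimpleGraph V) [DecidableRel G.Adj] (δ : ℝ) (z : VSet G)
    (S0 : Set (Finset (Sym2 V))) (h : ProbMeas (VSet G) → ℝ) (n : ℕ) : EReal :=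
  if 0 < ∑ g : Fin (n + 1) → VSet G,
      (if empMeas n g ∈ CC G S0 then liftTraj G δ z n g else 0) then
    ((-((((n : ℝ) + 1))⁻¹ * Real.log (∑ g : Fin (n + 1) → VSet G,
      if empMeas n g ∈ CC G S0 then
        Real.exp (-((n : ℝ) + 1) * h (empMeas n g)) * liftTraj G δ z n g
      else 0)) : ℝ) : EReal)
  else (⊤ : EReal)

end Lifted

/-!
Every kernel in `𝒯_S` is absolutely continuous with respect to `p_F` when `δ > 0`, so the cost of
each tuple in the infimum is a real number, and `Λ_{δ,𝒮₀}(μ) < ∞` says exactly that such a tuple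
exists.

Given a tuple, the largest `E_k` carrying positive weight contains the support of `μ`, and
averaging the rows `q_k(z, ·)` with weights `r_k μ_k(z) / μ(z)` makes `μ` invariant. Conversely, if
`μ` lives on `F ∈ 𝒮₀`, connectedness allows a sequence in `ℰ` to pass through `F`; put all the
weight there and fill the other levels with measures invariant under reversal of a single edge.
-/

section RelativeEntropy

theorem sum_mem_range_coe {ι : Type*} {s : Finset ι} {f : ι → EReal}
    (hf : ∀ i ∈ s, f i ∈ Set.range Real.toEReal) : ∑ i ∈ s, f i ∈ Set.range Real.toEReal := by
  refine Finset.sum_induction f (· ∈ Set.range Real.toEReal) ?_ ⟨0, rfl⟩ hf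
  rintro _ _ ⟨x, rfl⟩ ⟨y, rfl⟩
  exact ⟨x + y, EReal.coe_add x y⟩

theorem coe_mul_mem_range_coe (x : ℝ) {y : EReal} (hy : y ∈ Set.range Real.toEReal) :
    (x : EReal) * y ∈ Set.range Real.toEReal := by
  obtain ⟨y, rfl⟩ := hy
  exact ⟨x * y, EReal.coe_mul x y⟩

variable {A : Type} [Fintype A]

theorem relEnt_mem_range_coe {γ ρ : A → ℝ} (hγρ : ∀ a, ρ a = 0 → γ a = 0) :
    relEnt γ ρ ∈ Set.range Real.toEReal :=
  ⟨_, (if_pos hγρ).symm⟩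

theorem relEntInt_mem_range_coe {ν : A → ℝ} {q p : A → A → ℝ}
    (hqp : ∀ a, ν a ≠ 0 → ∀ b, p a b = 0 → q a b = 0) :
    relEntInt ν q p ∈ Set.range Real.toEReal := by
  refine sum_mem_range_coe fun a _ => ?_
  by_cases ha : ν a = 0
  · exact ⟨0, by rw [ha, EReal.coe_zero, zero_mul]⟩
  · exact coe_mul_mem_range_coe _ (relEnt_mem_range_coe (hqp a ha))

end RelativeEntropy

section Mixture

variable {ι : Type*} {A : Type} [Fintype ι] {r : ι → ℝ} {μs : ι → A → ℝ}

/-- The posterior weight of the component `k` of the mixture `∑ k, r k * μs k`, given the point `a`.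
At points which the mixture does not charge it is set to the prior weight `r k`, so that it is
always a probability vector in `k`. -/
def posterior (r : ι → ℝ) (μs : ι → A → ℝ) (a : A) (k : ι) : ℝ :=
  if ∑ j, r j * μs j a = 0 then r k else r k * μs k a / ∑ j, r j * μs j a

theorem posterior_nonneg (hr : ∀ k, 0 ≤ r k) (hμs : ∀ k a, 0 ≤ μs k a) (a : A) (k : ι) :
    0 ≤ posterior r μs a k := by
  unfold posterior
  split_ifs
  · exact hr k
  · exact div_nonneg (mul_nonneg (hr k) (hμs k a))
      (Finset.sum_nonneg fun j _ => mul_nonneg (hr j) (hμs j a))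

theorem sum_posterior (hr : ∑ k, r k = 1) (a : A) : ∑ k, posterior r μs a k = 1 := by
  unfold posterior
  split_ifs with ha
  · exact hr
  · rw [← Finset.sum_div, div_self ha]

theorem mixture_mul_posterior (hr : ∀ k, 0 ≤ r k) (hμs : ∀ k a, 0 ≤ μs k a) (a : A) (k : ι) :
    (∑ j, r j * μs j a) * posterior r μs a k = r k * μs k a := by
  unfold posterior
  split_ifs with ha
  · rw [ha, zero_mul]
    exact ((Finset.sum_eq_zero_iff_of_nonneg fun j _ => mul_nonneg (hr j) (hμs j a)).1 ha k
      (Finset.mem_univ k)).symm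
  · exact mul_div_cancel₀ _ ha

theorem invariant_mixture [Fintype A] {qs : ι → A → A → ℝ} (hr : ∀ k, 0 ≤ r k)
    (hμs : ∀ k a, 0 ≤ μs k a) (hqs : ∀ k, Invariant (μs k) (qs k)) :
    Invariant (fun a => ∑ k, r k * μs k a)
      (fun a b => ∑ k, posterior r μs a k * qs k a b) := fun b =>
  calc ∑ a, (∑ j, r j * μs j a) * ∑ k, posterior r μs a k * qs k a b
      = ∑ a, ∑ k, r k * (μs k a * qs k a b) := by
        simp only [Finset.mul_sum, ← mul_assoc, mixture_mul_posterior hr hμs]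
    _ = ∑ k, r k * ∑ a, μs k a * qs k a b := by
        rw [Finset.sum_comm]
        simp only [Finset.mul_sum]
    _ = ∑ k, r k * μs k b := by simp only [hqs _ b]

end Mixture

section EdgeGrowth

variable {V : Type}

/-- Any two vertices of the edge set `F` are joined by a path in `F`; this is the connectedness
clause of `scrS`. -/
def EdgeConnected (F : Finset (Sym2 V)) : Prop :=
  ∀ x y : V, memVerts F x → memVerts F y →
    (SimpleGraph.fromEdgeSet (↑F : Set (Sym2 V))).Reachable x y

theorem edgeConnected_edgeFinset {G : SimpleGraph V} [Fintype G.edgeSet] (hG : G.Preconnected) :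
    EdgeConnected G.edgeFinset := by
  intro x y _ _
  rw [SimpleGraph.coe_edgeFinset, SimpleGraph.fromEdgeSet_edgeSet]
  exact hG x y

theorem EdgeConnected.exists_edgeAdj_of_ssubset {A B : Finset (Sym2 V)} (hB : EdgeConnected B)
    (hA : A.Nonempty) (hAB : A ⊂ B) : ∃ e ∈ B, e ∉ A ∧ ∃ e' ∈ A, edgeAdj e e' := by
  obtain ⟨e, heB, heA⟩ := Finset.exists_of_ssubset hAB
  obtain ⟨a, ha⟩ := hA
  have hu : memVerts A a.out.1 := ⟨a, ha, a.out_fst_mem⟩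
  by_cases hx : memVerts A e.out.1
  · obtain ⟨e', he', hxe'⟩ := hx
    exact ⟨e, heB, heA, e', he', _, e.out_fst_mem, hxe'⟩
  · obtain ⟨walk⟩ := hB a.out.1 e.out.1 ⟨a, hAB.1 ha, a.out_fst_mem⟩ ⟨e, heB, e.out_fst_mem⟩
    obtain ⟨d, -, ⟨e', he', hde'⟩, hd⟩ := walk.exists_boundary_dart {v | memVerts A v} hu hx
    exact ⟨s(d.fst, d.snd), ((SimpleGraph.fromEdgeSet_adj _).1 d.adj).1,
      fun hmem => hd ⟨_, hmem, Sym2.mem_mk_right _ _⟩, e', he', d.fst, Sym2.mem_mk_left _ _, hde'⟩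

variable [DecidableEq V]

/-- `B` arises from `A` by adding one new edge, adjacent to an edge of `A`: the steps which the
sequences in `seqE` are allowed to make. -/
def EdgeExtends (A B : Finset (Sym2 V)) : Prop :=
  ∃ e ∉ A, insert e A = B ∧ ∃ e' ∈ A, edgeAdj e e'

namespace EdgeExtends

variable {A B : Finset (Sym2 V)}

theorem ssubset (h : EdgeExtends A B) : A ⊂ B := by
  obtain ⟨e, he, rfl, -⟩ := h
  exact Finset.ssubset_insert he

theorem card_eq (h : EdgeExtends A B) : B.card = A.card + 1 := by
  obtain ⟨e, he, rfl, -⟩ := h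
  exact Finset.card_insert_of_notMem he

theorem exists_edgeAdj_of_mem_sdiff (h : EdgeExtends A B) {e : Sym2 V} (he : e ∈ B \ A) :
    ∃ e' ∈ A, edgeAdj e e' := by
  obtain ⟨f, -, rfl, hf⟩ := h
  obtain ⟨heB, heA⟩ := Finset.mem_sdiff.1 he
  exact (Finset.mem_insert.1 heB).resolve_right heA ▸ hf

end EdgeExtends

/-- `s` leads from `A` to `B` by steps adding a single adjacent edge. The sequence is indexed by
cardinality, so only its values on `[#A, #B]` matter. -/
structure IsGrowthSeq (A B : Finset (Sym2 V)) (s : ℕ → Finset (Sym2 V)) : Prop where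
  left : s A.card = A
  right : s B.card = B
  step : ∀ n, A.card ≤ n → n < B.card → EdgeExtends (s n) (s (n + 1))

theorem EdgeConnected.exists_isGrowthSeq {A B : Finset (Sym2 V)} (hB : EdgeConnected B)
    (hA : A.Nonempty) (hAB : A ⊆ B) : ∃ s, IsGrowthSeq A B s := by
  induction hn : B.card - A.card generalizing A with
  | zero =>
    obtain rfl : A = B := Finset.eq_of_subset_of_card_le hAB (by omega)
    exact ⟨fun _ => A, rfl, rfl, fun n h h' => absurd h' h.not_gt⟩
  | succ n ih =>
    have hss : A ⊂ B := hAB.ssubset_of_ne (by rintro rfl; omega)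
    obtain ⟨e, heB, heA, hadj⟩ := hB.exists_edgeAdj_of_ssubset hA hss
    have hcard : (insert e A).card = A.card + 1 := Finset.card_insert_of_notMem heA
    obtain ⟨s, hs⟩ := ih (Finset.insert_nonempty e A) (Finset.insert_subset heB hAB) (by omega)
    refine ⟨Function.update s A.card A, Function.update_self .., ?_, fun m hAm hmB => ?_⟩
    · rw [Function.update_of_ne (Finset.card_lt_card hss).ne', hs.right]
    · rw [Function.update_of_ne (show m + 1 ≠ A.card by omega)]
      rcases hAm.eq_or_lt with rfl | hlt
      · rw [Function.update_self, ← hcard, hs.left]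
        exact ⟨e, heA, rfl, hadj⟩
      · rw [Function.update_of_ne hlt.ne']
        exact hs.step m (by omega) hmB

namespace IsGrowthSeq

variable {A B C : Finset (Sym2 V)} {s t : ℕ → Finset (Sym2 V)}

theorem append (hs : IsGrowthSeq A B s) (ht : IsGrowthSeq B C t) (hAB : A.card ≤ B.card)
    (hBC : B.card ≤ C.card) : IsGrowthSeq A C (fun n => if n < B.card then s n else t n) where
  left := by
    split_ifs with hlt
    · exact hs.left
    · have heq : A.card = B.card := hAB.antisymm (not_lt.1 hlt)
      rw [heq, ht.left, ← hs.right, ← heq, hs.left]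
  right := by rw [if_neg hBC.not_gt, ht.right]
  step n hAn hnC := by
    rcases lt_trichotomy (n + 1) B.card with hlt | heq | hgt
    · rw [if_pos (by omega), if_pos hlt]
      exact hs.step n hAn (by omega)
    · rw [if_pos (by omega), if_neg heq.not_lt, heq, ht.left, ← hs.right, ← heq]
      exact hs.step n hAn (by omega)
    · rw [if_neg (by omega), if_neg hgt.not_gt]
      exact ht.step n (by omega) hnC

theorem monotoneOn (hs : IsGrowthSeq A B s) : MonotoneOn s (Set.Icc A.card B.card) :=
  monotoneOn_of_le_add_one Set.ordConnected_Icc fun n _ hn hn' =>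
    (hs.step n hn.1 (Nat.lt_of_succ_le hn'.2)).ssubset.le

theorem card_eq (hs : IsGrowthSeq A B s) {n : ℕ} (hAn : A.card ≤ n) (hnB : n ≤ B.card) :
    (s n).card = n := by
  induction n, hAn using Nat.le_induction with
  | base => rw [hs.left]
  | succ n hAn ih => rw [(hs.step n hAn hnB).card_eq, ih (by omega)]

theorem mem_seqE {G : SimpleGraph V} [Fintype V] [DecidableRel G.Adj] {v₁ : V} {e : Sym2 V}
    (hs : IsGrowthSeq {e} G.edgeFinset s) (hv₁ : v₁ ∈ e) :
    (fun k : Fin G.edgeFinset.card => s (k + 1)) ∈ seqE G v₁ := by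
  have hstep (k l : Fin G.edgeFinset.card) (hkl : (k : ℕ) + 1 = l) :
      EdgeExtends (s (k + 1)) (s (l + 1)) := by
    rw [← hkl]
    exact hs.step (k + 1) (by simp) (hkl ▸ l.2)
  refine ⟨fun k => ?_, fun k => hs.card_eq (by simp) k.2, fun k l hkl => (hstep k l hkl).ssubset,
    fun k hk => ⟨e, ?_, hv₁⟩, fun k l hkl e he => (hstep k l hkl).exists_edgeAdj_of_mem_sdiff he⟩
  · calc s (k + 1) ⊆ s G.edgeFinset.card :=
          hs.monotoneOn ⟨by simp, k.2⟩ ⟨by rw [Finset.card_singleton]; exact k.pos, le_rfl⟩ k.2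
      _ = G.edgeFinset := hs.right
  · have hfirst : s (k + 1) = {e} := by
      rw [hk]
      exact hs.left
    exact hfirst.ge (Finset.mem_singleton_self e)

end IsGrowthSeq

variable [Fintype V] {G : SimpleGraph V} [DecidableRel G.Adj] {v₁ : V}

theorem exists_mem_seqE_eq (hG : EdgeConnected G.edgeFinset) {F : Finset (Sym2 V)}
    (hF : F ∈ scrS G v₁) : ∃ Es ∈ seqE G v₁, ∃ k, Es k = F := by
  obtain ⟨hFG, ⟨e, heF, hv₁⟩, hFconn : EdgeConnected F⟩ := hF
  have heF' : {e} ⊆ F := Finset.singleton_subset_iff.2 heF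
  obtain ⟨s, hs⟩ := hFconn.exists_isGrowthSeq (Finset.singleton_nonempty e) heF'
  obtain ⟨t, ht⟩ := hG.exists_isGrowthSeq ⟨e, heF⟩ hFG
  refine ⟨_, (hs.append ht (Finset.card_le_card heF') (Finset.card_le_card hFG)).mem_seqE hv₁, ?_⟩
  have hpos : F.card - 1 + 1 = F.card := Nat.sub_add_cancel (Finset.card_pos.2 ⟨e, heF⟩)
  refine ⟨⟨F.card - 1, hpos ▸ Finset.card_le_card hFG⟩, ?_⟩
  simp only [hpos, lt_irrefl, if_false, ht.left]

theorem monotone_of_mem_seqE {Es : Fin G.edgeFinset.card → Finset (Sym2 V)}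
    (hEs : Es ∈ seqE G v₁) : Monotone Es :=
  (monotone_iff_forall_covBy Es).2 fun k l hkl =>
    (hEs.2.2.1 k l (Nat.covBy_iff_add_one_eq.1 (Fin.covBy_iff.1 hkl))).le

end EdgeGrowth

section LiftedWalk

theorem gw_pos {V : Type} [DecidableEq V] {δ : ℝ} (hδ : 0 < δ) (F : Finset (Sym2 V)) (e : Sym2 V) :
    0 < gw δ F e := by
  unfold gw
  split_ifs
  exacts [hδ, one_pos]

variable {V : Type} [Fintype V] [LinearOrder V] {G : SimpleGraph V} [DecidableRel G.Adj]

theorem pS_pos {δ : ℝ} (hδ : 0 < δ) (F : Finset (Sym2 V)) {z w : VSet G}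
    (hzw : zp G z = zm G w) : 0 < pS G δ F z w := by
  rw [pS, if_pos hzw]
  refine div_pos (gw_pos hδ F _) (Finset.sum_pos' (fun x _ => ?_) ⟨w, Finset.mem_univ w, ?_⟩)
  · split_ifs
    exacts [(gw_pos hδ F _).le, le_rfl]
  · rw [if_pos hzw]
    exact gw_pos hδ F _

theorem eq_zero_of_mem_TS_of_pS_eq_zero {δ : ℝ} (hδ : 0 < δ) {F : Finset (Sym2 V)}
    {q : VSet G → VSet G → ℝ} (hq : q ∈ TS G) {z w : VSet G} (hp : pS G δ F z w = 0) :
    q z w = 0 :=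
  not_not.1 fun hne => (pS_pos hδ F (hq.2.2 z w hne)).ne' hp

theorem sum_mul_mem_TS {ι : Type*} [Fintype ι] {c : VSet G → ι → ℝ}
    {qs : ι → VSet G → VSet G → ℝ} (hc : ∀ z k, 0 ≤ c z k) (hc_sum : ∀ z, ∑ k, c z k = 1)
    (hqs : ∀ k, qs k ∈ TS G) : (fun z w => ∑ k, c z k * qs k z w) ∈ TS G := by
  refine ⟨fun z w => ?_, fun z => ?_, fun z w hzw => ?_⟩
  · exact Finset.sum_nonneg fun k _ => mul_nonneg (hc z k) ((hqs k).1 z w)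
  · rw [Finset.sum_comm]
    simp only [← Finset.mul_sum, (hqs _).2.1 z, mul_one, hc_sum]
  · obtain ⟨k, -, hk⟩ := Finset.exists_ne_zero_of_sum_ne_zero hzw
    exact (hqs k).2.2 z w (right_ne_zero_of_mul hk)

/-- The kernel on `V_S` which deterministically reverses the orientation of an edge. -/
def reversalKernel (G : SimpleGraph V) [DecidableRel G.Adj] (z w : VSet G) : ℝ :=
  if w = (z.1, !z.2) then 1 else 0

theorem reversalKernel_mem_TS : reversalKernel G ∈ TS G := by
  refine ⟨fun z w => ?_, fun z => ?_, fun z w hzw => ?_⟩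
  · unfold reversalKernel
    split_ifs
    exacts [zero_le_one, le_rfl]
  · simp [reversalKernel]
  · obtain rfl : w = (z.1, !z.2) := not_not.1 fun h => hzw (if_neg h)
    cases h : z.2 <;> simp [zp, zm, h]

/-- The uniform measure on the two orientations of the edge `e`. -/
def orientationUniform (e : {e : Sym2 V // e ∈ G.edgeFinset}) : ProbMeas (VSet G) :=
  ⟨fun z => if z.1 = e then 1 / 2 else 0, fun z => by dsimp only; split_ifs <;> norm_num,
    by rw [Fintype.sum_prod_type_right]; simp⟩

theorem eq_of_orientationUniform_ne_zero {e : {e : Sym2 V // e ∈ G.edgeFinset}} {z : VSet G}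
    (hz : (orientationUniform e).1 z ≠ 0) : z.1 = e :=
  not_not.1 fun h => hz (if_neg h)

theorem invariant_orientationUniform (e : {e : Sym2 V // e ∈ G.edgeFinset}) :
    Invariant (orientationUniform e).1 (reversalKernel G) := by
  intro w
  have hrev (z : VSet G) : w = (z.1, !z.2) ↔ z = (w.1, !w.2) := by
    constructor <;> rintro rfl <;> simp
  simp [reversalKernel, orientationUniform, hrev]

/-- The constraints on the tuples over which `Lam` takes its infimum. -/
structure IsAdmissible (v₁ : V) (S0 : Set (Finset (Sym2 V))) (μ : ProbMeas (VSet G))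
    (μs : Fin G.edgeFinset.card → ProbMeas (VSet G)) (r : Fin G.edgeFinset.card → ℝ)
    (Es : Fin G.edgeFinset.card → Finset (Sym2 V))
    (qs : Fin G.edgeFinset.card → VSet G → VSet G → ℝ) : Prop where
  mem_seqE : Es ∈ seqE G v₁
  nonneg : ∀ k, 0 ≤ r k
  eq_zero_of_notMem : ∀ k, Es k ∉ S0 → r k = 0
  sum_eq_one : ∑ k, r k = 1
  mem_of_ne_zero : ∀ k z, (μs k).1 z ≠ 0 → z.1.1 ∈ Es k
  mixture_eq : ∀ z, ∑ k, r k * (μs k).1 z = μ.1 z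
  mem_TS : ∀ k, qs k ∈ TS G
  invariant : ∀ k, Invariant (μs k).1 (qs k)

variable {v₁ : V} {δ : ℝ} {S0 : Set (Finset (Sym2 V))} {μ : ProbMeas (VSet G)}

theorem Lam_lt_top_iff_exists_isAdmissible (hδ : 0 < δ) :
    Lam G v₁ δ S0 μ < ⊤ ↔ ∃ μs r Es qs, IsAdmissible v₁ S0 μ μs r Es qs := by
  rw [Lam, sInf_lt_iff]
  constructor
  · rintro ⟨-, ⟨μs, r, Es, qs, hEs, hr, hrS0, hr_sum, hsupp, hmix, hqs, hinv, -⟩, -⟩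
    exact ⟨μs, r, Es, qs, hEs, hr, hrS0, hr_sum, hsupp, hmix, hqs, hinv⟩
  · rintro ⟨μs, r, Es, qs, hEs, hr, hrS0, hr_sum, hsupp, hmix, hqs, hinv⟩
    have hcost : ∑ k, (r k : EReal) * relEntInt (μs k).1 (qs k) (pS G δ (Es k)) ∈
        Set.range Real.toEReal :=
      sum_mem_range_coe fun k _ => coe_mul_mem_range_coe _ <| relEntInt_mem_range_coe
        fun _ _ _ => eq_zero_of_mem_TS_of_pS_eq_zero hδ (hqs k)
    obtain ⟨x, hx⟩ := hcost
    exact ⟨x, ⟨μs, r, Es, qs, hEs, hr, hrS0, hr_sum, hsupp, hmix, hqs, hinv, hx⟩,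
      EReal.coe_lt_top x⟩

namespace IsAdmissible

variable {μs : Fin G.edgeFinset.card → ProbMeas (VSet G)} {r : Fin G.edgeFinset.card → ℝ}
  {Es : Fin G.edgeFinset.card → Finset (Sym2 V)}
  {qs : Fin G.edgeFinset.card → VSet G → VSet G → ℝ}

theorem mem_CC (h : IsAdmissible v₁ S0 μ μs r Es qs) : μ ∈ CC G S0 := by
  have hne : (Finset.univ.filter (r · ≠ 0)).Nonempty := by
    obtain ⟨k, hk, hrk⟩ := Finset.exists_ne_zero_of_sum_ne_zero (h.sum_eq_one ▸ one_ne_zero)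
    exact ⟨k, Finset.mem_filter.2 ⟨hk, hrk⟩⟩
  obtain ⟨l, hl, hmax⟩ := Finset.exists_max_image _ id hne
  refine ⟨Es l, not_not.1 fun hS0 => (Finset.mem_filter.1 hl).2 (h.eq_zero_of_notMem l hS0), ?_⟩
  intro z hz
  rw [← h.mixture_eq z] at hz
  obtain ⟨k, hk, hkz⟩ := Finset.exists_ne_zero_of_sum_ne_zero hz
  have hkl : k ≤ l := hmax k (Finset.mem_filter.2 ⟨hk, left_ne_zero_of_mul hkz⟩)
  exact monotone_of_mem_seqE h.mem_seqE hkl (h.mem_of_ne_zero k z (right_ne_zero_of_mul hkz))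

theorem exists_invariant (h : IsAdmissible v₁ S0 μ μs r Es qs) :
    ∃ q ∈ TS G, Invariant μ.1 q := by
  have hμs (k) (z) : 0 ≤ (μs k).1 z := (μs k).2.1 z
  refine ⟨_, sum_mul_mem_TS (posterior_nonneg h.nonneg hμs) (sum_posterior h.sum_eq_one) h.mem_TS,
    ?_⟩
  have hmix : μ.1 = fun z => ∑ k, r k * (μs k).1 z := funext fun z => (h.mixture_eq z).symm
  rw [hmix]
  exact invariant_mixture h.nonneg hμs h.invariant

end IsAdmissible

theorem exists_isAdmissible (hG : EdgeConnected G.edgeFinset) {F : Finset (Sym2 V)}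
    (hF : F ∈ scrS G v₁) (hFS0 : F ∈ S0) (hsupp : ∀ z, μ.1 z ≠ 0 → z.1.1 ∈ F)
    {q : VSet G → VSet G → ℝ} (hq : q ∈ TS G) (hinv : Invariant μ.1 q) :
    ∃ μs r Es qs, IsAdmissible v₁ S0 μ μs r Es qs := by
  obtain ⟨Es, hEs, l, rfl⟩ := exists_mem_seqE_eq hG hF
  have hlevel (k : Fin G.edgeFinset.card) : ∃ (ν : ProbMeas (VSet G)) (p : VSet G → VSet G → ℝ),
      (∀ z, ν.1 z ≠ 0 → z.1.1 ∈ Es k) ∧ p ∈ TS G ∧ Invariant ν.1 p ∧ (k = l → ν = μ) := by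
    by_cases hkl : k = l
    · exact ⟨μ, q, hkl ▸ hsupp, hq, hinv, fun _ => rfl⟩
    · obtain ⟨e, he⟩ : (Es k).Nonempty := Finset.card_pos.1 (by rw [hEs.2.1 k]; omega)
      exact ⟨orientationUniform ⟨e, hEs.1 k he⟩, reversalKernel G,
        fun z hz => eq_of_orientationUniform_ne_zero hz ▸ he, reversalKernel_mem_TS,
        invariant_orientationUniform _, fun h => absurd h hkl⟩
  choose μs qs hμs hqs hμs_inv hμs_l using hlevel
  refine ⟨μs, Pi.single l 1, Es, qs, hEs, fun k => ?_, fun k hk => ?_, ?_, hμs, fun z => ?_, hqs,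
    hμs_inv⟩
  · exact (Pi.single_nonneg (α := fun _ => ℝ)).2 zero_le_one k
  · exact Pi.single_eq_of_ne (by rintro rfl; exact hk hFS0) 1
  · exact Fintype.sum_pi_single' l 1
  · simp [Pi.single_apply, hμs_l l rfl]

theorem orrw_Lam_finite_iff_general (hG : EdgeConnected G.edgeFinset) (hδ : 0 < δ)
    (hS0 : S0 ⊆ scrS G v₁) :
    Lam G v₁ δ S0 μ < ⊤ ↔ μ ∈ CC G S0 ∧ ∃ q ∈ TS G, Invariant μ.1 q := by
  rw [Lam_lt_top_iff_exists_isAdmissible hδ]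
  constructor
  · rintro ⟨μs, r, Es, qs, h⟩
    exact ⟨h.mem_CC, h.exists_invariant⟩
  · rintro ⟨⟨F, hF, hsupp⟩, q, hq, hinv⟩
    exact exists_isAdmissible hG (hS0 hF) hF hsupp hq hinv

end LiftedWalk

/-- `Λ_{δ,𝒮₀}(μ) < ∞` iff `μ ∈ 𝒞(𝒮₀)` and `μ` is invariant for
some `q ∈ 𝒯_S`. -/
theorem orrw_Lam_finite_iff {V : Type} [Fintype V] [LinearOrder V]
    (G : SimpleGraph V) [DecidableRel G.Adj] (hG : G.Connected)
    (hV : 3 ≤ Fintype.card V) (v₁ : V) (δ : ℝ) (hδ : 0 < δ)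
    (S0 : Set (Finset (Sym2 V))) (hS0ne : S0.Nonempty) (hS0sub : S0 ⊆ scrS G v₁)
    (hS0dec : DecreasingIn G v₁ S0) :
    ∀ μ : ProbMeas (VSet G),
      Lam G v₁ δ S0 μ < ⊤ ↔ (μ ∈ CC G S0 ∧ ∃ q ∈ TS G, Invariant μ.1 q) :=
  fun _ => orrw_Lam_finite_iff_general (edgeConnected_edgeFinset hG.preconnected) hδ hS0sub

end ORRW
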